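/- Let E : {0,1}^{2^ℓ} × {0,1}^r → {0,1}^m be a (k, ε)-extractor. Then there exists a function Red : ({0,1}^m → {0,1}) × {0,1}^ℓ × {0,1}^{k+1} → {0,1} such that for every f ∈ Func_{ℓ,1} and every D : {0,1}^m → {0,1} that ε-PRG-breaks Con^E_f, there exists α ∈ {0,1}^{k+1} with Red(D, x, α) = f(x) for every x ∈ {0,1}^ℓ. -/

import Mathlib

open scoped BigOperators

attribute [local instance] Classical.propDecidable

noncomputable section

/-- Probability that a uniformly random element of a finite type satisfies `P`. -/
def uPr {X : Type*} [Fintype X] (P : X → Prop) : ℝ :=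
  (Fintype.card {x : X // P x} : ℝ) / (Fintype.card X : ℝ)

/-- Probability of `P` under `t` i.i.d. bits, each equal to `true` with probability `p`. -/
def bPr {t : ℕ} (p : ℝ) (P : (Fin t → Bool) → Prop) : ℝ :=
  ∑ x : Fin t → Bool, if P x then (∏ i, if x i then p else 1 - p) else 0

/-- An adaptive `q`-query oracle procedure with input set `I` and query set `Q`. -/
structure OracleProc (q : ℕ) (I : Type*) (Q : Type*) where
  qry : (i : Fin q) → I → (Fin i.val → Bool) → Q
  out : I → (Fin q → Bool) → Bool

/-- The answer to the `i`-th query when running with oracle `D` on input `w`. -/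
def OracleProc.ans {q : ℕ} {I Q : Type*} (P : OracleProc q I Q) (D : Q → Bool) (w : I)
    (i : Fin q) : Bool :=
  D (P.qry i w (fun j => P.ans D w ⟨j.val, j.isLt.trans i.isLt⟩))
termination_by i.val
decreasing_by exact j.isLt

/-- The output of the oracle procedure, with oracle `D`, on input `w`. -/
def OracleProc.run {q : ℕ} {I Q : Type*} (P : OracleProc q I Q) (D : Q → Bool) (w : I) : Bool :=
  P.out w (P.ans D w)

/-- A clause over `n` Boolean variables: a list of literals (variable, polarity). -/
abbrev BClause (n : ℕ) := List (Fin n × Bool)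

/-- A CNF over `n` Boolean variables: a list of clauses. -/
abbrev BCNF (n : ℕ) := List (BClause n)

def BClause.eval {n : ℕ} (c : BClause n) (x : Fin n → Bool) : Bool :=
  c.any (fun l => x l.1 == l.2)

def BCNF.eval {n : ℕ} (φ : BCNF n) (x : Fin n → Bool) : Bool :=
  φ.all (fun c => BClause.eval c x)

/-- A `q`-CNF: every clause has at most `q` literals. -/
def BCNF.width {n : ℕ} (φ : BCNF n) (q : ℕ) : Prop :=
  ∀ c ∈ φ, c.length ≤ q

/-- Hamming weight. -/
def wt {n : ℕ} (x : Fin n → Bool) : ℕ :=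
  (Finset.univ.filter (fun i => x i = true)).card

/-- The set of free (`*`) positions of a restriction. -/
def freeSet {n : ℕ} (ρ : Fin n → Option Bool) : Finset (Fin n) :=
  Finset.univ.filter (fun i => ρ i = none)

/-- The number of free positions of a restriction. -/
def freeCount {n : ℕ} (ρ : Fin n → Option Bool) : ℕ := (freeSet ρ).card

/-- Fill the free positions of a restriction `ρ` with the bits of `x`, in order. -/
def Fill {n t : ℕ} (ρ : Fin n → Option Bool) (h : freeCount ρ = t)
    (x : Fin t → Bool) : Fin n → Bool := fun i =>
  if hm : i ∈ freeSet ρ then x (((freeSet ρ).orderIsoOfFin h).symm ⟨i, hm⟩)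
  else (ρ i).getD false

/-- The restrictions on `n` variables with exactly `t` free positions. -/
abbrev Restr (n t : ℕ) := {ρ : Fin n → Option Bool // freeCount ρ = t}

/-- Relative Hamming distance. -/
def relDist {n : ℕ} (x y : Fin n → Bool) : ℝ :=
  ((Finset.univ.filter (fun i => x i ≠ y i)).card : ℝ) / n

end
noncomputable section

/-- The probability that `E(X, U_r) ∈ A` when `X` has probability mass function `μ`
and the seed is uniform and independent. -/
def extHitPr {S : Type*} [Fintype S] {r m : ℕ}
    (E : S → (Fin r → Bool) → (Fin m → Bool)) (μ : S → ℝ) (A : (Fin m → Bool) → Prop) : ℝ :=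
  ∑ f : S, ∑ y : Fin r → Bool, if A (E f y) then μ f / 2 ^ r else 0

/-- `E` is a `(k,ε)`-extractor: for every source distribution `μ` with min-entropy at least `k`
(i.e. all point masses at most `2^{-k}`), the output distribution `E(X, U_r)` is `ε`-close to
uniform, i.e. every event has probability within `ε` of its uniform probability. -/
def IsExtractor {S : Type*} [Fintype S] {r m : ℕ}
    (E : S → (Fin r → Bool) → (Fin m → Bool)) (k ε : ℝ) : Prop :=
  ∀ μ : S → ℝ, (∀ f, 0 ≤ μ f) → (∑ f, μ f) = 1 → (∀ f, μ f ≤ (2 : ℝ) ^ (-k)) →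
    ∀ A : (Fin m → Bool) → Prop,
      |extHitPr E μ A - uPr A| ≤ ε

end
theorem aux_hit {S : Type*} [Fintype S] {r m : ℕ}
    (E : S → (Fin r → Bool) → (Fin m → Bool)) (μ : S → ℝ) (A : (Fin m → Bool) → Prop) :
    extHitPr E μ A = ∑ f, μ f * uPr (fun y => A (E f y)) := by
  unfold extHitPr uPr
  refine Finset.sum_congr rfl fun f _ => ?_
  rw [← Finset.sum_filter, Finset.sum_const, Fintype.card_subtype]
  simp only [nsmul_eq_mul, Fintype.card_fun, Fintype.card_bool, Fintype.card_fin, Nat.cast_pow,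
    Nat.cast_ofNat]
  ring

theorem aux_small {S : Type*} [Fintype S] {r m : ℕ} (k : ℕ) (ε : ℝ)
    (E : S → (Fin r → Bool) → (Fin m → Bool)) (hE : IsExtractor E (k : ℝ) ε)
    (A : (Fin m → Bool) → Prop) (s : ℝ) (hs : |s| ≤ 1) (T : Finset S)
    (hT : ∀ f ∈ T, ε < s * (uPr (fun y => A (E f y)) - uPr A)) : T.card < 2 ^ k := by
  by_contra hc
  push Not at hc
  have hpos : 0 < T.card := lt_of_lt_of_le (by positivity) hc
  have hposR : (0 : ℝ) < T.card := by exact_mod_cast hpos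
  have hsum : (∑ f, (if f ∈ T then (1 : ℝ) / T.card else 0)) = 1 := by
    rw [← Finset.sum_filter, Finset.sum_const, Finset.filter_univ_mem, nsmul_eq_mul]
    field_simp
  have h := hE (fun f => if f ∈ T then (1 : ℝ) / T.card else 0)
    (fun f => by split_ifs <;> positivity) hsum
    (fun f => by
      split_ifs
      · rw [Real.rpow_neg (by norm_num), Real.rpow_natCast, one_div]
        apply inv_anti₀ (by positivity)
        exact_mod_cast hc
      · positivity) A
  rw [aux_hit] at h
  have h2 : (∑ f, (if f ∈ T then (1 : ℝ) / T.card else 0) * uPr (fun y => A (E f y))) - uPr A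
      = (∑ f ∈ T, (uPr (fun y => A (E f y)) - uPr A)) / T.card := by
    simp only [ite_mul, zero_mul]
    rw [← Finset.sum_filter, Finset.filter_univ_mem, Finset.sum_sub_distrib, Finset.sum_const,
      nsmul_eq_mul, ← Finset.mul_sum]
    field_simp
  rw [h2] at h
  have h3 : (T.card : ℝ) * ε < ∑ f ∈ T, s * (uPr (fun y => A (E f y)) - uPr A) := by
    rw [← nsmul_eq_mul, ← Finset.sum_const]
    exact Finset.sum_lt_sum_of_nonempty (Finset.card_pos.mp hpos) hT
  rw [← Finset.mul_sum] at h3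
  set Z := ∑ f ∈ T, (uPr (fun y => A (E f y)) - uPr A)
  rw [abs_div, abs_of_pos hposR, div_le_iff₀ hposR] at h
  have h4 : s * Z ≤ |Z| := by
    calc s * Z ≤ |s * Z| := le_abs_self _
      _ = |s| * |Z| := abs_mul _ _
      _ ≤ 1 * |Z| := by gcongr
      _ = |Z| := one_mul _
  linarith

/-- Proposition 3.4 (2): if `E` is a `(k,ε)`-extractor, then the construction `Con^E` can be
matched with a reduction with advice length `k + 1`. -/
theorem extractor_implies_blackbox_PRG_proof (ℓ r m k : ℕ) (ε : ℝ)
    (E : ((Fin ℓ → Bool) → Bool) → (Fin r → Bool) → (Fin m → Bool))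
    (hE : IsExtractor E (k : ℝ) ε) :
    ∃ Red : ((Fin m → Bool) → Bool) → (Fin ℓ → Bool) → (Fin (k + 1) → Bool) → Bool,
      ∀ (f : (Fin ℓ → Bool) → Bool) (D : (Fin m → Bool) → Bool),
        |uPr (fun y : Fin r → Bool => D (E f y) = true) -
            uPr (fun u : Fin m → Bool => D u = true)| > ε →
        ∃ α : Fin (k + 1) → Bool, ∀ x : Fin ℓ → Bool, Red D x α = f x := by
  have key : ∀ D : (Fin m → Bool) → Bool,
      ∃ g : (Fin (k + 1) → Bool) → ((Fin ℓ → Bool) → Bool),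
      ∀ f, |uPr (fun y : Fin r → Bool => D (E f y) = true) -
            uPr (fun u : Fin m → Bool => D u = true)| > ε → ∃ α, g α = f := by
    intro D
    let d : ((Fin ℓ → Bool) → Bool) → ℝ := fun f =>
      uPr (fun y : Fin r → Bool => D (E f y) = true) - uPr (fun u : Fin m → Bool => D u = true)
    let T1 := Finset.univ.filter (fun f => ε < 1 * d f)
    let T2 := Finset.univ.filter (fun f => ε < (-1) * d f)
    have c1 : T1.card < 2 ^ k := aux_small k ε E hE (fun u => D u = true) 1 (by simp) T1
      (fun f hf => (Finset.mem_filter.mp hf).2)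
    have c2 : T2.card < 2 ^ k := aux_small k ε E hE (fun u => D u = true) (-1) (by simp) T2
      (fun f hf => (Finset.mem_filter.mp hf).2)
    have c3 : Fintype.card ↥(T1 ∪ T2) ≤ Fintype.card (Fin (k + 1) → Bool) := by
      have := Finset.card_union_le T1 T2
      simp only [Fintype.card_coe, Fintype.card_fun, Fintype.card_bool, Fintype.card_fin, pow_succ]
      omega
    obtain ⟨e⟩ := Function.Embedding.nonempty_of_card_le c3
    refine ⟨fun α => if h : ∃ t, e t = α then (h.choose : (Fin ℓ → Bool) → Bool)
      else fun _ => false, fun f hf => ?_⟩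
    have hm : f ∈ T1 ∪ T2 := by
      rw [Finset.mem_union]
      rcases lt_abs.mp hf with h | h
      · left
        exact Finset.mem_filter.mpr ⟨Finset.mem_univ _, by rw [one_mul]; exact h⟩
      · right
        exact Finset.mem_filter.mpr ⟨Finset.mem_univ _, by rw [neg_one_mul]; exact h⟩
    refine ⟨e ⟨f, hm⟩, ?_⟩
    have hx : ∃ t, e t = e ⟨f, hm⟩ := ⟨_, rfl⟩
    beta_reduce
    rw [dif_pos hx]
    exact congrArg Subtype.val (e.injective hx.choose_spec)
  choose g hg using key
  refine ⟨fun D x α => g D α x, fun f D h => ?_⟩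
  obtain ⟨α, hα⟩ := hg D f h
  exact ⟨α, fun x => congrFun hα x⟩
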